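/- arXiv:0812.5002 — 2 statements merged into one kernel-verified Lean document; each statement's English description precedes it below -/
import Mathlib

section
/- Let L be the centerless twisted N=2 superconformal algebra, V = L ⊗ L the L-module under the adjoint diagonal action, and let d₀ be an odd (parity 1̄) homogeneous super-derivation from L to V of degree 0 with respect to the (1/2)ℤ-grading. Then d₀ is inner: there exists u ∈ V_0 of odd parity such that d₀(x) = (−1)^{[x]} x ∗ u for all homogeneous x ∈ L. -/
namespace N2

/-- Basis indices of the centerless twisted N=2 superconformal algebra:
`L m` is the Virasoro generator `L_m` (`m ∈ ℤ`),
`T k` is the Heisenberg generator `T_{k+1/2}` (`k ∈ ℤ`, index in `1/2 + ℤ`),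
`G n` is the fermionic generator `G_{n/2}` (`n ∈ ℤ`, index in `(1/2)ℤ`). -/
inductive Idx : Type
  | L : ℤ → Idx
  | T : ℤ → Idx
  | G : ℤ → Idx
  deriving DecidableEq

noncomputable section

/-- The centerless twisted N=2 superconformal algebra `𝓛`, as the free
complex vector space on the basis `{L_m, T_r, G_p}`. -/
abbrev Lsa : Type := Idx →₀ ℂ

/-- `𝓛 ⊗ 𝓛`, realized as the free complex vector space on pairs of basis indices. -/
abbrev V : Type := (Idx × Idx) →₀ ℂ

/-- `𝓛 ⊗ 𝓛 ⊗ 𝓛`. -/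
abbrev W : Type := (Idx × Idx × Idx) →₀ ℂ

/-- the basis vector indexed by `i`. -/
def e (i : Idx) : Lsa := Finsupp.single i 1

/-- the ℤ₂-parity of the basis elements: `L_m, T_r` are even, `G_p` is odd. -/
def par : Idx → ZMod 2
  | .L _ => 0
  | .T _ => 0
  | .G _ => 1

/-- the sign `(-1)^p` for `p ∈ ℤ₂`. -/
def sgn (p : ZMod 2) : ℂ := if p = 0 then 1 else -1

/-- the `(1/2)ℤ`-degree of a basis element, as a rational number:
`L_m ↦ m`, `T_{k+1/2} ↦ k + 1/2`, `G_{n/2} ↦ n/2`. -/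
def qdeg : Idx → ℚ
  | .L m => (m : ℚ)
  | .T k => (k : ℚ) + 1/2
  | .G n => (n : ℚ) / 2

/-- The super-bracket of `𝓛` on basis elements:
`[L_m, L_n] = (m-n) L_{m+n}`, `[L_m, T_r] = -r T_{r+m}`, `[T_r, T_s] = 0`,
`[L_m, G_p] = (m/2 - p) G_{p+m}`, `[T_r, G_p] = G_{p+r}`,
`[G_p, G_q] = (-1)^{2p} 2 L_{p+q}` if `p+q ∈ ℤ` and
`[G_p, G_q] = (-1)^{2p+1} (p-q) T_{p+q}` if `p+q ∈ 1/2+ℤ`,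
together with the super skew-symmetric counterparts. -/
def bk : Idx → Idx → Lsa
  | .L m, .L n => ((m : ℂ) - n) • e (.L (m + n))
  | .L m, .T k => (-((k : ℂ) + 1/2)) • e (.T (k + m))
  | .L m, .G n => (((m : ℂ) - n) / 2) • e (.G (n + 2*m))
  | .T k, .L m => ((k : ℂ) + 1/2) • e (.T (k + m))
  | .T _, .T _ => 0
  | .T k, .G n => e (.G (n + 2*k + 1))
  | .G n, .L m => (-((m : ℂ) - n) / 2) • e (.G (n + 2*m))
  | .G n, .T k => - e (.G (n + 2*k + 1))
  | .G n, .G n' =>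
      if (n + n') % 2 = 0 then
        ((-1 : ℂ) ^ n * 2) • e (.L ((n + n') / 2))
      else
        ((-1 : ℂ) ^ (n + 1) * (((n : ℂ) - n') / 2)) • e (.T ((n + n' - 1) / 2))

/-- the bracket of `𝓛`, extended bilinearly to all of `𝓛`. -/
def br (x y : Lsa) : Lsa :=
  x.sum fun i a => y.sum fun j b => (a * b) • bk i j

/-- the adjoint diagonal action of `𝓛` on `𝓛 ⊗ 𝓛`:
`x ∗ (a ⊗ b) = [x,a] ⊗ b + (-1)^{[x][a]} a ⊗ [x,b]`. -/
def act2 (x : Lsa) (v : V) : V :=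
  x.sum fun i a => v.sum fun p c =>
    (a * c) •
      (((bk i p.1).sum fun k t => Finsupp.single (k, p.2) t)
        + sgn (par i * par p.1) • ((bk i p.2).sum fun k t => Finsupp.single (p.1, k) t))

/-- the adjoint diagonal action of `𝓛` on `𝓛 ⊗ 𝓛 ⊗ 𝓛`. -/
def act3 (x : Lsa) (w : W) : W :=
  x.sum fun i a => w.sum fun p c =>
    (a * c) •
      (((bk i p.1).sum fun k t => Finsupp.single (k, p.2.1, p.2.2) t)
        + sgn (par i * par p.1) •
            ((bk i p.2.1).sum fun k t => Finsupp.single (p.1, k, p.2.2) t)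
        + sgn (par i * (par p.1 + par p.2.1)) •
            ((bk i p.2.2).sum fun k t => Finsupp.single (p.1, p.2.1, k) t))

/-- the adjoint diagonal action of `𝓛` on the `n`-fold tensor power `𝓛^{⊗n}`,
realized as the free complex vector space on `n`-tuples of basis indices:
`x ∗ (a₁ ⊗ ⋯ ⊗ aₙ) = Σ_k (-1)^{[x]([a₁]+⋯+[a_{k-1}])} a₁ ⊗ ⋯ ⊗ [x,a_k] ⊗ ⋯ ⊗ aₙ`. -/
def actN (n : ℕ) (x : Lsa) (v : (Fin n → Idx) →₀ ℂ) : (Fin n → Idx) →₀ ℂ :=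
  x.sum fun i a => v.sum fun f c =>
    (a * c) •
      (Finset.univ.sum fun k : Fin n =>
        sgn (par i * ((Finset.univ.filter fun l => l < k).sum fun l => par (f l))) •
          ((bk i (f k)).sum fun j t => Finsupp.single (Function.update f k j) t))

/-- the super-twist map `τ : 𝓛 ⊗ 𝓛 → 𝓛 ⊗ 𝓛`, `τ(x ⊗ y) = (-1)^{[x][y]} y ⊗ x`. -/
def tau (v : V) : V :=
  v.sum fun p c => (sgn (par p.1 * par p.2) * c) • Finsupp.single (p.2, p.1) 1

/-- the image `Im(1⊗1 - τ) ⊂ 𝓛 ⊗ 𝓛`. -/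
def ImOneSubTau : Set V := Set.range fun v : V => v - tau v

/-- the super-cyclic map `ξ` on `𝓛 ⊗ 𝓛 ⊗ 𝓛`:
`ξ(x₁ ⊗ x₂ ⊗ x₃) = (-1)^{[x₁]([x₂]+[x₃])} x₂ ⊗ x₃ ⊗ x₁`. -/
def xi (w : W) : W :=
  w.sum fun p c =>
    (sgn (par p.1 * (par p.2.1 + par p.2.2)) * c) • Finsupp.single (p.2.1, p.2.2, p.1) 1

/-- `c(r) = [r¹², r¹³] + [r¹², r²³] + [r¹³, r²³] ∈ 𝓛 ⊗ 𝓛 ⊗ 𝓛` for `r ∈ 𝓛 ⊗ 𝓛`. -/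
def cYB (r : V) : W :=
  r.sum fun p a => r.sum fun q b =>
    (a * b) •
      (sgn (par q.1 * par p.2) •
          ((bk p.1 q.1).sum fun k t => Finsupp.single (k, p.2, q.2) t)
        + ((bk p.2 q.1).sum fun k t => Finsupp.single (p.1, k, q.2) t)
        + sgn (par q.1 * par p.2) •
            ((bk p.2 q.2).sum fun k t => Finsupp.single (p.1, q.1, k) t))

/-- `1 ⊗ D : 𝓛 ⊗ 𝓛 → 𝓛 ⊗ 𝓛 ⊗ 𝓛` for an even map `D : 𝓛 → 𝓛 ⊗ 𝓛`. -/
def oneTensorMap (D : Lsa → V) (v : V) : W :=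
  v.sum fun p c => c • ((D (e p.2)).sum fun q t => Finsupp.single (p.1, q.1, q.2) t)

/-- `r ∈ 𝓛 ⊗ 𝓛` is homogeneous of parity `ε ∈ ℤ₂`. -/
def IsParityV (ε : ZMod 2) (r : V) : Prop := ∀ p ∈ r.support, par p.1 + par p.2 = ε

/-- `r ∈ 𝓛 ⊗ 𝓛` is even (degree `0̄`). -/
def IsEvenV (r : V) : Prop := IsParityV 0 r

/-- `r` lies in the graded component `V_ι = Σ_{j+k=ι} 𝓛_j ⊗ 𝓛_k` of `V = 𝓛 ⊗ 𝓛`. -/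
def IsDegV (ι : ℚ) (r : V) : Prop := ∀ p ∈ r.support, qdeg p.1 + qdeg p.2 = ι

/-- the linear map `𝓛 → M` with the prescribed values on the basis. -/
def ofBasis {M : Type*} [AddCommMonoid M] [Module ℂ M] (g : Idx → M) : Lsa →ₗ[ℂ] M :=
  Finsupp.lsum ℂ fun i => LinearMap.toSpanSingleton ℂ M (g i)

/-- the inner super-derivation `a_inn` attached to `a ∈ 𝓛 ⊗ 𝓛` of parity `ε`:
`a_inn(x) = (-1)^{[a][x]} x ∗ a` for homogeneous `x`, extended linearly. -/
def innMap (ε : ZMod 2) (a : V) : Lsa →ₗ[ℂ] V :=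
  ofBasis fun i => sgn (ε * par i) • act2 (e i) a

/-- `d : 𝓛 → 𝓛 ⊗ 𝓛` is a super-derivation of parity `ε`:
`d(𝓛_ī) ⊆ V_{ī+ε}` and
`d([x,y]) = (-1)^{[d][x]} x ∗ d(y) - (-1)^{[y]([d]+[x])} y ∗ d(x)`
for homogeneous `x, y` (stated on basis elements and extended bilinearly). -/
def IsDerOfParity (ε : ZMod 2) (d : Lsa →ₗ[ℂ] V) : Prop :=
  (∀ i : Idx, IsParityV (par i + ε) (d (e i))) ∧
  (∀ i j : Idx,
    d (bk i j)
      = sgn (ε * par i) • act2 (e i) (d (e j))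
        - sgn (par j * (ε + par i)) • act2 (e j) (d (e i)))

/-- `d` is homogeneous of degree `ι ∈ (1/2)ℤ` with respect to the `(1/2)ℤ`-grading:
`d(𝓛_j) ⊆ V_{ι+j}`. -/
def IsDegHomogDer (ι : ℚ) (d : Lsa →ₗ[ℂ] V) : Prop :=
  ∀ i : Idx, IsDegV (ι + qdeg i) (d (e i))

/-- `D : 𝓛 → 𝓛 ⊗ 𝓛` defines a Lie super-bialgebra structure on `𝓛`: it is linear,
`D(𝓛_ī) ⊆ Σ_j 𝓛_j̄ ⊗ 𝓛_{ī-j̄}`, `Im D ⊆ Im(1⊗1-τ)`,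
`(1⊗1⊗1 + ξ + ξ²)(1 ⊗ D)D = 0`, and
`D([x,y]) = x ∗ D(y) - (-1)^{[x][y]} y ∗ D(x)`. -/
structure IsLieSuperBialgebraDelta (D : Lsa → V) : Prop where
  linear : IsLinearMap ℂ D
  parity : ∀ i : Idx, IsParityV (par i) (D (e i))
  skewIm : ∀ x : Lsa, D x ∈ ImOneSubTau
  coJacobi : ∀ x : Lsa,
    oneTensorMap D (D x) + xi (oneTensorMap D (D x)) + xi (xi (oneTensorMap D (D x))) = 0
  cocycle : ∀ i j : Idx,
    D (bk i j) = act2 (e i) (D (e j)) - sgn (par i * par j) • act2 (e j) (D (e i))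

/-- The tensor product of two vectors. -/
def tens : Lsa →ₗ[ℂ] Lsa →ₗ[ℂ] V :=
  Finsupp.lsum ℂ fun a => LinearMap.toSpanSingleton ℂ _
    (Finsupp.lsum ℂ fun b => LinearMap.toSpanSingleton ℂ V (Finsupp.single (a, b) 1))

lemma tens_e (a b : Idx) : tens (e a) (e b) = Finsupp.single (a, b) 1 := by
  simp [tens, e]

/-- `ad i` is the adjoint action of the basis vector `i`. -/
def adB (i : Idx) : Lsa →ₗ[ℂ] Lsa := ofBasis fun j => bk i j

lemma ofBasis_e {M : Type*} [AddCommMonoid M] [Module ℂ M] (g : Idx → M) (i : Idx) :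
    ofBasis g (e i) = g i := by
  simp [ofBasis, e]

lemma adB_e (i j : Idx) : adB i (e j) = bk i j := ofBasis_e _ _

/-- the sign operator attached to the parity `ε`. -/
def sg (ε : ZMod 2) : Lsa →ₗ[ℂ] Lsa := ofBasis fun j => sgn (ε * par j) • e j

lemma sg_e (ε : ZMod 2) (j : Idx) : sg ε (e j) = sgn (ε * par j) • e j := ofBasis_e _ _

/-- linear maps out of `V` from values on the basis. -/
def ofB2 (g : Idx × Idx → V) : V →ₗ[ℂ] V :=
  Finsupp.lsum ℂ fun p => LinearMap.toSpanSingleton ℂ V (g p)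

lemma ofB2_single (g : Idx × Idx → V) (p : Idx × Idx) :
    ofB2 g (Finsupp.single p 1) = g p := by
  simp [ofB2]

/-- the action of a basis element as a linear map. -/
def act (i : Idx) : V →ₗ[ℂ] V :=
  ofB2 fun p => tens (bk i p.1) (e p.2) + sgn (par i * par p.1) • tens (e p.1) (bk i p.2)

lemma tens_left (x : Lsa) (b : Idx) :
    tens x (e b) = x.sum fun k t => Finsupp.single (k, b) t := by
  simp [tens, e, Finsupp.sum, LinearMap.sum_apply]

lemma tens_right (x : Lsa) (a : Idx) :
    tens (e a) x = x.sum fun k t => Finsupp.single (a, k) t := by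
  simp [tens, e, Finsupp.sum]

lemma act2_e (i : Idx) (v : V) : act2 (e i) v = act i v := by
  rw [act2, e, Finsupp.sum_single_index]
  · simp only [act, ofB2, Finsupp.lsum_apply, one_mul, tens_left, tens_right]
    rfl
  · simp

lemma lin_ext {M : Type*} [AddCommMonoid M] [Module ℂ M] {f g : Lsa →ₗ[ℂ] M}
    (h : ∀ i, f (e i) = g (e i)) : f = g := by
  apply Finsupp.lhom_ext'
  intro i
  ext
  exact h i

lemma lin_ext2 {f g : V →ₗ[ℂ] V}
    (h : ∀ p, f (Finsupp.single p 1) = g (Finsupp.single p 1)) : f = g := by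
  apply Finsupp.lhom_ext'
  intro i
  ext1
  exact h i

lemma act_tens (i : Idx) (x y : Lsa) :
    act i (tens x y) = tens (adB i x) y + tens (sg (par i) x) (adB i y) := by
  have h : tens.compr₂ (act i)
      = (tens.comp (adB i)) + ((tens.comp (sg (par i))).compl₂ (adB i)) := by
    apply lin_ext
    intro a
    apply lin_ext
    intro b
    simp [tens_e, act, ofB2_single, adB_e, sg_e]
  have := congrArg (fun f => f x y) h
  simpa using this

/-- bracket coefficient -/
def cf : Idx → Idx → ℂ
  | .L m, .L n => (m : ℂ) - n
  | .L _, .T k => -((k : ℂ) + 1/2)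
  | .L m, .G n => ((m : ℂ) - n) / 2
  | .T k, .L _ => (k : ℂ) + 1/2
  | .T _, .T _ => 0
  | .T _, .G _ => 1
  | .G n, .L m => -((m : ℂ) - n) / 2
  | .G _, .T _ => -1
  | .G n, .G n' =>
      if (n + n') % 2 = 0 then (-1 : ℂ) ^ n * 2
      else (-1 : ℂ) ^ (n + 1) * (((n : ℂ) - n') / 2)

/-- bracket index -/
def zf : Idx → Idx → Idx
  | .L m, .L n => .L (m + n)
  | .L m, .T k => .T (k + m)
  | .L m, .G n => .G (n + 2*m)
  | .T k, .L m => .T (k + m)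
  | .T k, .T _ => .T k
  | .T k, .G n => .G (n + 2*k + 1)
  | .G n, .L m => .G (n + 2*m)
  | .G n, .T k => .G (n + 2*k + 1)
  | .G n, .G n' =>
      if (n + n') % 2 = 0 then .L ((n + n') / 2) else .T ((n + n' - 1) / 2)

lemma bk_eq (i j : Idx) : bk i j = cf i j • e (zf i j) := by
  cases i <;> cases j <;> simp [bk, cf, zf]
  split_ifs <;> rfl

lemma par_zf (i j : Idx) : par (zf i j) = par i + par j := by
  cases i <;> cases j <;> simp [par, zf]
  split_ifs <;> rfl

lemma act_single (i a b : Idx) : act i (Finsupp.single (a, b) 1)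
    = cf i a • Finsupp.single (zf i a, b) 1
      + (sgn (par i * par a) * cf i b) • Finsupp.single (a, zf i b) 1 := by
  simp only [act, ofB2_single, bk_eq, map_smul, LinearMap.smul_apply, tens_e, smul_smul]

/-- vectors of parity `ε` as a submodule. -/
def PV (ε : ZMod 2) : Submodule ℂ V :=
  Finsupp.supported ℂ ℂ {p | par p.1 + par p.2 = ε}

lemma mem_PV (ε : ZMod 2) (v : V) : v ∈ PV ε ↔ IsParityV ε v := by
  simp [PV, Finsupp.mem_supported, IsParityV, Set.subset_def]

/-- vectors of degree `q` as a submodule. -/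
def DV (q : ℚ) : Submodule ℂ V :=
  Finsupp.supported ℂ ℂ {p | qdeg p.1 + qdeg p.2 = q}

lemma mem_DV (q : ℚ) (v : V) : v ∈ DV q ↔ IsDegV q v := by
  simp [DV, Finsupp.mem_supported, IsDegV, Set.subset_def]

lemma supp_map (S : Set (Idx × Idx)) (N : Submodule ℂ V) (f : V →ₗ[ℂ] V)
    (h : ∀ p ∈ S, f (Finsupp.single p 1) ∈ N) (v : V)
    (hv : v ∈ Finsupp.supported ℂ ℂ S) : f v ∈ N := by
  rw [Finsupp.supported_eq_span_single] at hv
  have : Submodule.span ℂ ((fun i => Finsupp.single i (1 : ℂ)) '' S) ≤ N.comap f := by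
    rw [Submodule.span_le]
    rintro _ ⟨p, hp, rfl⟩
    exact h p hp
  exact this hv

lemma supp_eq (S : Set (Idx × Idx)) (f g : V →ₗ[ℂ] V)
    (h : ∀ p ∈ S, f (Finsupp.single p 1) = g (Finsupp.single p 1)) (v : V)
    (hv : v ∈ Finsupp.supported ℂ ℂ S) : f v = g v := by
  have := supp_map S ⊥ (f - g) (by
    intro p hp
    simp [h p hp]) v hv
  simpa [sub_eq_zero] using this

lemma act_PV (i : Idx) (ε : ZMod 2) (v : V) (hv : v ∈ PV ε) : act i v ∈ PV (par i + ε) := by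
  refine supp_map _ _ _ ?_ v hv
  rintro ⟨a, b⟩ hp
  simp only [Set.mem_ofPred_eq] at hp
  rw [act_single]
  refine add_mem (Submodule.smul_mem _ _ ?_) (Submodule.smul_mem _ _ ?_)
  · apply Finsupp.single_mem_supported
    simp only [Set.mem_ofPred_eq, par_zf, ← hp]
    ring
  · apply Finsupp.single_mem_supported
    simp only [Set.mem_ofPred_eq, par_zf, ← hp]
    ring

/-- Jacobi identity with one entry `T`. -/
lemma jac (k : ℤ) (y a : Idx) :
    adB (.T k) (adB y (e a)) - adB y (adB (.T k) (e a)) = cf (.T k) y • adB (zf (.T k) y) (e a) := by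
  simp only [adB_e, bk_eq, map_smul]
  rcases y with m | l | n <;> rcases a with m' | l' | n'
  case G.G =>
    have hk : (-1 : ℂ) ^ (2 * k) = 1 := by
      rw [zpow_mul]; norm_num
    have h1 : (-1 : ℂ) ^ (n + 1) = - (-1) ^ n := by
      rw [zpow_add₀ (by norm_num)]; simp
    have h2 : (-1 : ℂ) ^ (n + 2 * k + 1) = - (-1) ^ n := by
      rw [zpow_add₀ (by norm_num), zpow_add₀ (by norm_num), hk]; simp
    have h3 : (-1 : ℂ) ^ (n + 2 * k + 1 + 1) = (-1) ^ n := by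
      rw [zpow_add₀ (by norm_num), h2]; simp
    by_cases hp : (n + n') % 2 = 0
    · have e1 : ¬ (n + (n' + 2 * k + 1)) % 2 = 0 := by omega
      have e2 : ¬ (n + 2 * k + 1 + n') % 2 = 0 := by omega
      have e3 : (n + (n' + 2 * k + 1) - 1) / 2 = k + (n + n') / 2 := by omega
      have e4 : (n + 2 * k + 1 + n' - 1) / 2 = k + (n + n') / 2 := by omega
      simp only [cf, zf, if_pos hp, if_neg e1, if_neg e2, e3, e4, h1, h3, smul_smul,
        ← sub_smul]
      congr 1
      push_cast
      ring
    · have e1 : (n + (n' + 2 * k + 1)) % 2 = 0 := by omega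
      have e2 : (n + 2 * k + 1 + n') % 2 = 0 := by omega
      have e3 : (n + 2 * k + 1 + n') / 2 = (n + (n' + 2 * k + 1)) / 2 := by omega
      simp only [cf, zf, if_neg hp, if_pos e1, if_pos e2, e3, h1, h2, smul_smul,
        zero_smul]
      module
  all_goals
    simp only [cf, zf, smul_smul]
    push_cast
    ring_nf
    try module

lemma sg_adT (k : ℤ) (ε : ZMod 2) (x : Lsa) :
    sg ε (adB (.T k) x) = adB (.T k) (sg ε x) := by
  have : (sg ε).comp (adB (.T k)) = (adB (.T k)).comp (sg ε) := by
    apply lin_ext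
    intro a
    simp only [LinearMap.comp_apply, adB_e, sg_e, map_smul, bk_eq, par_zf, smul_smul]
    simp [par, mul_comm]
  exact congrArg (fun f => f x) this

lemma sg_zero (x : Lsa) : sg 0 x = x := by
  have : sg 0 = LinearMap.id := by
    apply lin_ext
    intro a
    simp [sg_e, sgn]
  rw [this]; rfl

lemma act_comm (k : ℤ) (y : Idx) (v : V) :
    act (.T k) (act y v) - act y (act (.T k) v) = cf (.T k) y • act (zf (.T k) y) v := by
  have : (act (.T k)).comp (act y) - (act y).comp (act (.T k))
      = cf (.T k) y • act (zf (.T k) y) := by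
    apply lin_ext2
    rintro ⟨a, b⟩
    have ja := jac k y a
    have jb := jac k y b
    have hT : par (.T k) = 0 := rfl
    simp only [LinearMap.sub_apply, LinearMap.comp_apply, LinearMap.smul_apply, ← tens_e,
      act_tens, map_add, par_zf, hT, sg_zero, zero_add, smul_add]
    rw [← LinearMap.smul_apply, ← map_smul, ← map_smul (tens _), ← ja, ← jb, sg_adT]
    simp only [map_sub, LinearMap.sub_apply]
    abel
  exact congrArg (fun f => f v) this

/-- the inverse of `T_{1/2}` on odd vectors. -/
def Binv : V →ₗ[ℂ] V := ofB2 fun p => match p with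
  | (.G n, .T q) => Finsupp.single (.G (n - 1), .T q) 1
  | (.T q, .G n) => Finsupp.single (.T q, .G (n - 1)) 1
  | (.G n, .L m) => Finsupp.single (.G (n - 1), .L m) 1
      - (1/2 : ℂ) • Finsupp.single (.G (n - 2), .T m) 1
  | (.L m, .G n) => Finsupp.single (.L m, .G (n - 1)) 1
      - (1/2 : ℂ) • Finsupp.single (.T m, .G (n - 2)) 1
  | _ => 0

lemma act_Binv (v : V) (hv : v ∈ PV 1) : act (.T 0) (Binv v) = v := by
  refine supp_eq _ ((act (.T 0)).comp Binv) LinearMap.id ?_ v hv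
  rintro ⟨a, b⟩ hp
  rcases a with m | l | n <;> rcases b with m' | l' | n' <;>
    simp [par] at hp <;>
    simp [Binv, ofB2_single, act_single, cf, zf, par, sgn, -Finsupp.smul_single]
  all_goals ring_nf
  all_goals try module

lemma Binv_act (v : V) (hv : v ∈ PV 1) : Binv (act (.T 0) v) = v := by
  refine supp_eq _ (Binv.comp (act (.T 0))) LinearMap.id ?_ v hv
  rintro ⟨a, b⟩ hp
  rcases a with m | l | n <;> rcases b with m' | l' | n' <;>
    simp [par] at hp <;>
    simp [Binv, ofB2_single, act_single, cf, zf, par, sgn, -Finsupp.smul_single]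
  all_goals ring_nf
  all_goals try module

lemma Binv_PV (v : V) (hv : v ∈ PV 1) : Binv v ∈ PV 1 := by
  refine supp_map _ _ _ ?_ v hv
  rintro ⟨a, b⟩ hp
  rcases a with m | l | n <;> rcases b with m' | l' | n' <;>
    simp only [Binv, ofB2_single, zero_mem]
  all_goals first
    | exact Finsupp.single_mem_supported _ _ hp
    | exact sub_mem (Finsupp.single_mem_supported _ _ hp)
        (Submodule.smul_mem _ _ (Finsupp.single_mem_supported _ _ hp))

lemma Binv_DV (v : V) (hv : v ∈ DV (1/2)) : Binv v ∈ DV 0 := by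
  refine supp_map _ _ _ ?_ v hv
  rintro ⟨a, b⟩ hp
  rcases a with m | l | n <;> rcases b with m' | l' | n' <;>
    simp only [Binv, ofB2_single, zero_mem] <;>
    simp only [Set.mem_ofPred_eq, qdeg] at hp
  all_goals
    try refine sub_mem ?_ (Submodule.smul_mem _ _ ?_)
  all_goals
    apply Finsupp.single_mem_supported
    simp only [Set.mem_ofPred_eq, qdeg]
    push_cast
    linarith

lemma inj_odd (v : V) (hv : v ∈ PV 1) (h : act (.T 0) v = 0) : v = 0 := by
  rw [← Binv_act v hv, h, map_zero]

lemma coef_ext (φ ψ : V →ₗ[ℂ] ℂ)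
    (h : ∀ p, φ (Finsupp.single p 1) = ψ (Finsupp.single p 1)) (v : V) : φ v = ψ v := by
  have : φ = ψ := by
    apply Finsupp.lhom_ext'
    intro i
    ext
    exact h i
  rw [this]

lemma coef_LL (k a b : ℤ) (v : V) : act (.T k) v (.L a, .L b) = 0 := by
  refine coef_ext ((Finsupp.lapply (.L a, .L b)).comp (act (.T k))) 0 ?_ v
  rintro ⟨x, y⟩
  cases x <;> cases y <;> simp [act_single, cf, zf]

lemma coef_LT (k a b : ℤ) (v : V) :
    act (.T k) v (.L a, .T b) = ((k : ℂ) + 1/2) * v (.L a, .L (b - k)) := by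
  refine coef_ext ((Finsupp.lapply (.L a, .T b)).comp (act (.T k)))
    (((k : ℂ) + 1/2) • Finsupp.lapply (.L a, .L (b - k))) ?_ v
  rintro ⟨x, y⟩
  cases x <;> cases y <;> simp [act_single, cf, zf, Finsupp.single_apply, par, sgn]
  grind

lemma coef_TL (k a b : ℤ) (v : V) :
    act (.T k) v (.T a, .L b) = ((k : ℂ) + 1/2) * v (.L (a - k), .L b) := by
  refine coef_ext ((Finsupp.lapply (.T a, .L b)).comp (act (.T k)))
    (((k : ℂ) + 1/2) • Finsupp.lapply (.L (a - k), .L b)) ?_ v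
  rintro ⟨x, y⟩
  cases x <;> cases y <;> simp [act_single, cf, zf, Finsupp.single_apply, par, sgn]
  grind

lemma coef_TT (k a b : ℤ) (v : V) :
    act (.T k) v (.T a, .T b)
      = ((k : ℂ) + 1/2) * (v (.L (a - k), .T b) + v (.T a, .L (b - k))) := by
  refine coef_ext ((Finsupp.lapply (.T a, .T b)).comp (act (.T k)))
    (((k : ℂ) + 1/2) • (Finsupp.lapply (.L (a - k), .T b)
      + Finsupp.lapply (.T a, .L (b - k)))) ?_ v
  rintro ⟨x, y⟩
  cases x <;> cases y <;> simp [act_single, cf, zf, Finsupp.single_apply, par, sgn]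
  all_goals grind

lemma coef_GG (k a b : ℤ) (v : V) :
    act (.T k) v (.G a, .G b)
      = v (.G (a - (2 * k + 1)), .G b) + v (.G a, .G (b - (2 * k + 1))) := by
  refine coef_ext ((Finsupp.lapply (.G a, .G b)).comp (act (.T k)))
    (Finsupp.lapply (.G (a - (2 * k + 1)), .G b)
      + Finsupp.lapply (.G a, .G (b - (2 * k + 1)))) ?_ v
  rintro ⟨x, y⟩
  cases x <;> cases y <;> simp [act_single, cf, zf, Finsupp.single_apply, par, sgn]
  grind

lemma even_zero (f : V) (hf : f ∈ PV 0) (h : act (.T (-1)) (act (.T 0) f) = f) : f = 0 := by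
  have hLL : ∀ (a b : ℤ), f (.L a, .L b) = 0 := by
    intro a b
    rw [← h, coef_LL]
  have hLT : ∀ (a b : ℤ), f (.L a, .T b) = 0 := by
    intro a b
    rw [← h, coef_LT, coef_LL, mul_zero]
  have hTL : ∀ (a b : ℤ), f (.T a, .L b) = 0 := by
    intro a b
    rw [← h, coef_TL, coef_LL, mul_zero]
  have hTT : ∀ (a b : ℤ), f (.T a, .T b) = 0 := by
    intro a b
    rw [← h, coef_TT, coef_LT, coef_TL, hLL, hLL]
    simp
  have hrec : ∀ (a b : ℤ), f (.G a, .G b) + f (.G (a + 1), .G (b - 1))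
      + f (.G (a - 1), .G (b + 1)) = 0 := by
    intro a b
    have := congrArg (fun w : V => w (.G a, .G b)) h
    simp only [coef_GG] at this
    ring_nf at this
    ring_nf
    linear_combination this
  have hGG : ∀ (a b : ℤ), f (.G a, .G b) = 0 := by
    have hbd : ∃ N : ℤ, ∀ (a b : ℤ), N ≤ a → f (.G a, .G b) = 0 := by
      let g : Idx × Idx → ℤ := fun p => match p.1 with
        | .G a => a
        | _ => 0
      obtain ⟨N, hN⟩ := (f.support.image g).bddAbove
      refine ⟨N + 1, fun a b hab => ?_⟩
      by_contra hne
      have h1 : g (.G a, .G b) ∈ f.support.image g :=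
        Finset.mem_image_of_mem _ (by simpa using hne)
      have h2 : a ≤ N := hN h1
      omega
    obtain ⟨N, hN⟩ := hbd
    have key : ∀ (j : ℕ) (a b : ℤ), N - j ≤ a → f (.G a, .G b) = 0 := by
      intro j
      induction j with
      | zero => intro a b hab; exact hN a b (by simpa using hab)
      | succ j ih =>
        intro a b hab
        push_cast at hab
        have h0 := hrec (a + 1) (b - 1)
        rw [ih (a + 1) _ (by omega), ih (a + 1 + 1) _ (by omega)] at h0
        simpa using h0
    intro a b
    exact key (N - a).toNat a b (by omega)
  ext ⟨x, y⟩
  rcases x with m | l | n <;> rcases y with m' | l' | n'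
  case L.L => simpa using hLL m m'
  case L.T => simpa using hLT m l'
  case T.L => simpa using hTL l m'
  case T.T => simpa using hTT l l'
  case G.G => simpa using hGG n n'
  all_goals
    by_contra hne
    have := (mem_PV 0 f).1 hf _ (Finsupp.mem_support_iff.2 hne)
    simp [par] at this

/-- An odd homogeneous super-derivation `d₀ : 𝓛 → V = 𝓛 ⊗ 𝓛` of degree `0`
is inner: there is an odd `u ∈ V_0` with `d₀(x) = (-1)^{[x]} x ∗ u`
for all homogeneous `x ∈ 𝓛`. -/
theorem odd_degree_zero_der_is_inner (d : Lsa →ₗ[ℂ] V)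
    (hd : IsDerOfParity 1 d) (hhom : IsDegHomogDer 0 d) :
    ∃ u : V, IsParityV 1 u ∧ IsDegV 0 u ∧
      ∀ i : Idx, d (e i) = sgn (par i) • act2 (e i) u := by
  obtain ⟨hpar, hder⟩ := hd
  have hT0 : d (e (.T 0)) ∈ PV 1 := by
    have := hpar (.T 0)
    rw [← mem_PV] at this
    simpa [par] using this
  have hT0' : d (e (.T 0)) ∈ DV (1/2) := by
    have := hhom (.T 0)
    rw [← mem_DV] at this
    simpa [qdeg] using this
  obtain ⟨u, hu⟩ : ∃ u, u = Binv (d (e (.T 0))) := ⟨_, rfl⟩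
  have huP : u ∈ PV 1 := hu ▸ Binv_PV _ hT0
  have huD : u ∈ DV 0 := hu ▸ Binv_DV _ hT0'
  have hdu : act (.T 0) u = d (e (.T 0)) := hu ▸ act_Binv _ hT0
  refine ⟨u, (mem_PV _ _).1 huP, (mem_DV _ _).1 huD, ?_⟩
  obtain ⟨D, hD⟩ : ∃ D : Idx → V, ∀ i, D i = d (e i) - sgn (par i) • act i u := ⟨_, fun _ => rfl⟩
  have hDP : ∀ i, D i ∈ PV (par i + 1) := by
    intro i
    rw [hD]
    exact sub_mem ((mem_PV _ _).2 (hpar i)) (Submodule.smul_mem _ _ (act_PV i 1 u huP))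
  have hDT : ∀ (k : ℤ), D (.T k) = 0 → ∀ y,
      cf (.T k) y • D (zf (.T k) y) = act (.T k) (D y) := by
    intro k hk y
    have h1 := hder (.T k) y
    have hk' : d (e (.T k)) = act (.T k) u := by
      rw [hD, sub_eq_zero] at hk
      simpa [par, sgn] using hk
    have h2 := act_comm k y u
    rw [bk_eq, map_smul, act2_e, act2_e, hk'] at h1
    have s1 : sgn (1 * par (.T k)) = 1 := by simp [par, sgn]
    have s2 : par y * (1 + par (.T k)) = par y := by simp [par]
    have s3 : par (zf (.T k) y) = par y := by
      rw [par_zf]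
      exact zero_add _
    rw [s1, s2, one_smul] at h1
    rw [hD, hD, s3, smul_sub, h1, smul_comm, ← h2, map_sub, map_smul, smul_sub]
    abel
  have h0 : D (.T 0) = 0 := by
    rw [hD, hdu]
    simp [par, sgn]
  have hTall : ∀ k, D (.T k) = 0 := by
    intro k
    apply inj_odd
    · simpa [par] using hDP (.T k)
    · rw [← hDT 0 h0 (.T k)]
      simp [cf]
  have hLall : ∀ m, D (.L m) = 0 := by
    intro m
    apply inj_odd
    · simpa [par] using hDP (.L m)
    · rw [← hDT 0 h0 (.L m)]
      simp [zf, hTall]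
  have hGall : ∀ n, D (.G n) = 0 := by
    intro n
    apply even_zero
    · have := hDP (.G n)
      have h2 : par (.G n) + 1 = 0 := by
        change (1 : ZMod 2) + 1 = 0
        decide
      rwa [h2] at this
    · rw [← hDT 0 h0 (.G n)]
      simp only [cf, zf, one_smul]
      rw [← hDT (-1) (hTall _)]
      simp only [cf, zf, one_smul]
      congr 2
      ring
  intro i
  rw [act2_e, ← sub_eq_zero, ← hD]
  cases i
  · exact hLall _
  · exact hTall _
  · exact hGall _

end
end N2
end

section
/- Let L be the centerless twisted N=2 superconformal algebra and τ the super-twist map on L ⊗ L. If r ∈ L ⊗ L satisfies x ∗ r ∈ Im(1⊗1 − τ) for all x ∈ L, then r ∈ Im(1⊗1 − τ). -/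
namespace N2

noncomputable section

/-- the index of `[L_m, i]`. -/
def shf (m : ℤ) : Idx → Idx
  | .L n => .L (m + n)
  | .T k => .T (k + m)
  | .G n => .G (n + 2*m)

/-- the coefficient of `[L_m, i]`. -/
def lam (m : ℤ) : Idx → ℂ
  | .L n => (m : ℂ) - n
  | .T k => -((k : ℂ) + 1/2)
  | .G n => ((m : ℂ) - n) / 2

/-- the absolute value of the index. -/
def absIdx : Idx → ℕ
  | .L n => n.natAbs
  | .T k => k.natAbs
  | .G n => n.natAbs

theorem bk_L (m : ℤ) (i : Idx) : bk (.L m) i = Finsupp.single (shf m i) (lam m i) := by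
  cases i <;> simp [bk, shf, lam, e]

theorem par_shf (m : ℤ) (i : Idx) : par (shf m i) = par i := by
  cases i <;> rfl

theorem shf_inj (m : ℤ) (i j : Idx) : shf m i = shf m j ↔ i = j := by
  cases i <;> cases j <;> simp [shf]

theorem lam_ne (m : ℤ) (N : ℕ) (hm : m = 2 * N + 1) (i : Idx) (hi : absIdx i ≤ N) :
    lam m i ≠ 0 := by
  cases i with
  | L n =>
    simp only [absIdx] at hi
    simp only [lam]
    rw [sub_ne_zero]
    intro h
    have : m = n := by exact_mod_cast h
    omega
  | T k =>
    simp only [lam]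
    intro h
    have h2 : (2 * k + 1 : ℂ) = 0 := by linear_combination -2 * h
    have : (2 * k + 1 : ℤ) = 0 := by exact_mod_cast h2
    omega
  | G n =>
    simp only [absIdx] at hi
    simp only [lam]
    intro h
    have h2 : (m : ℂ) = n := by linear_combination 2 * h
    have : m = n := by exact_mod_cast h2
    omega

theorem absIdx_shf (m : ℤ) (N : ℕ) (hm : m = 2 * N + 1) (i : Idx) (hi : absIdx i ≤ N) :
    N < absIdx (shf m i) := by
  cases i <;> simp only [absIdx, shf] at * <;> omega

theorem sgn_ne (p : ZMod 2) : sgn p * sgn p = 1 := by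
  unfold sgn; split_ifs <;> simp

theorem tau_apply (v : V) (a b : Idx) : tau v (a, b) = sgn (par a * par b) * v (b, a) := by
  unfold tau
  rw [Finsupp.sum_apply, Finsupp.sum, Finset.sum_eq_single (b, a)]
  · simp [mul_comm (par b)]
  · rintro ⟨x, y⟩ _ hne
    have : ¬ (y = a ∧ x = b) := by
      rintro ⟨rfl, rfl⟩; exact hne rfl
    simp [Finsupp.single_apply, this]
  · intro h
    simp [Finsupp.notMem_support_iff.mp h]

theorem mem_iff (v : V) :
    v ∈ ImOneSubTau ↔ ∀ a b, v (a, b) = - (sgn (par a * par b) * v (b, a)) := by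
  constructor
  · rintro ⟨w, rfl⟩ a b
    simp only [Finsupp.sub_apply, tau_apply, mul_comm (par b)]
    linear_combination (- w (a, b)) * sgn_ne (par a * par b)
  · intro h
    refine ⟨(1/2 : ℂ) • v, ?_⟩
    ext ⟨a, b⟩
    simp only [Finsupp.sub_apply, tau_apply, Finsupp.smul_apply, smul_eq_mul]
    linear_combination (-1/2 : ℂ) * h a b

theorem act2_L (m : ℤ) (v : V) : act2 (e (.L m)) v =
    v.sum fun p c => Finsupp.single (shf m p.1, p.2) (c * lam m p.1)
      + Finsupp.single (p.1, shf m p.2) (c * lam m p.2) := by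
  unfold act2 e
  rw [Finsupp.sum_single_index (by simp)]
  refine Finsupp.sum_congr fun p _ => ?_
  rw [bk_L, bk_L, Finsupp.sum_single_index (by simp), Finsupp.sum_single_index (by simp)]
  simp [par, sgn]

theorem act2_fst (m : ℤ) (v : V) (a b : Idx) (h : ∀ c, v (shf m a, c) = 0) :
    act2 (e (.L m)) v (shf m a, b) = lam m a * v (a, b) := by
  rw [act2_L, Finsupp.sum_apply, Finsupp.sum, Finset.sum_eq_single (a, b)]
  · have h1 : v (a, b) = 0 ∨ a ≠ shf m a := by
      by_cases h2 : a = shf m a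
      · left; rw [h2]; exact h b
      · exact Or.inr h2
    rcases h1 with h1 | h1
    · simp [h1]
    · simp [Finsupp.single_apply, h1, mul_comm]
  · rintro ⟨x, y⟩ hx hne
    have h1 : x ≠ shf m a := by
      rintro rfl
      exact Finsupp.mem_support_iff.mp hx (h y)
    have h2 : ¬ (x = a ∧ y = b) := by
      rintro ⟨rfl, rfl⟩; exact hne rfl
    simp [Finsupp.single_apply, shf_inj, h1, h2]
  · intro h
    simp [Finsupp.notMem_support_iff.mp h]

theorem act2_snd (m : ℤ) (v : V) (a b : Idx) (h : ∀ c, v (c, shf m a) = 0) :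
    act2 (e (.L m)) v (b, shf m a) = lam m a * v (b, a) := by
  rw [act2_L, Finsupp.sum_apply, Finsupp.sum, Finset.sum_eq_single (b, a)]
  · have h1 : v (b, a) = 0 ∨ a ≠ shf m a := by
      by_cases h2 : a = shf m a
      · left; rw [h2]; exact h b
      · exact Or.inr h2
    rcases h1 with h1 | h1
    · simp [h1]
    · simp [Finsupp.single_apply, h1, mul_comm]
  · rintro ⟨x, y⟩ hx hne
    have h1 : y ≠ shf m a := by
      rintro rfl
      exact Finsupp.mem_support_iff.mp hx (h x)
    have h2 : ¬ (x = b ∧ y = a) := by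
      rintro ⟨rfl, rfl⟩; exact hne rfl
    simp [Finsupp.single_apply, shf_inj, h1, h2]
  · intro h
    simp [Finsupp.notMem_support_iff.mp h]

/-- If `r ∈ 𝓛 ⊗ 𝓛` satisfies `x ∗ r ∈ Im(1⊗1 - τ)` for all `x ∈ 𝓛`,
then `r ∈ Im(1⊗1 - τ)`. -/
theorem mem_image_of_action_mem_image (r : V)
    (h : ∀ x : Lsa, act2 x r ∈ ImOneSubTau) :
    r ∈ ImOneSubTau := by
  obtain ⟨N, hN⟩ : ∃ N : ℕ, ∀ a b, r (a, b) ≠ 0 → absIdx a ≤ N ∧ absIdx b ≤ N := by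
    refine ⟨r.support.sup fun p => max (absIdx p.1) (absIdx p.2), fun a b hab => ?_⟩
    have := Finset.le_sup (f := fun p : Idx × Idx => max (absIdx p.1) (absIdx p.2))
      (Finsupp.mem_support_iff.mpr hab)
    exact max_le_iff.mp this
  rw [mem_iff]
  intro a b
  by_cases ha : absIdx a ≤ N
  · obtain ⟨m, hm⟩ : ∃ m : ℤ, m = 2 * N + 1 := ⟨_, rfl⟩
    have hs := absIdx_shf m N hm a ha
    have h1 : ∀ c, r (shf m a, c) = 0 := by
      intro c
      by_contra hc
      have := (hN _ _ hc).1
      omega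
    have h2 : ∀ c, r (c, shf m a) = 0 := by
      intro c
      by_contra hc
      have := (hN _ _ hc).2
      omega
    have h3 := (mem_iff _).mp (h (e (.L m))) (shf m a) b
    rw [act2_fst m r a b h1, act2_snd m r a b h2, par_shf] at h3
    apply mul_left_cancel₀ (lam_ne m N hm a ha)
    rw [h3]
    ring
  · have h1 : r (a, b) = 0 := by
      by_contra hc
      exact ha (hN _ _ hc).1
    have h2 : r (b, a) = 0 := by
      by_contra hc
      exact ha (hN _ _ hc).2
    simp [h1, h2]

end
end N2
end
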